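/- For every T = (𝐛,𝐫,𝐬) ∈ Tri^B_0(n,d) one has ∇(ξ_T) = Σ_{(T¹,T²) ∈ Spl(T)} (−1)^{⟨σ^T_{T¹,T²};𝐛⟩} ξ_{T¹} ⊗ ξ_{T²}. In particular, ∇(S^A(n,d)) ⊆ ⊕_{l=0}^d S^A(n,l) ⊗ S^A(n,d−l), so S^A(n) := ⊕_{d≥0} S^A(n,d) is a sub-supercoalgebra of ⊕_{d≥0} M_n(A)^{⊗d}. -/

import Mathlib

open Finset

open scoped Classical TensorProduct

noncomputable section

namespace GS

/-- A *good pair* `(A, 𝔞)`: a `𝕜`-superalgebra `A = ev ⊕ od` which is free as a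
`𝕜`-supermodule, together with a subalgebra `𝔞 = aa ⊆ A₀` such that `𝔞` and `A/𝔞` are free,
a complement `𝔠 = cc` of `𝔞` in `A₀`, and an `(A,𝔞)`-basis `B = B_𝔞 ⊔ B_𝔠 ⊔ B_1`
(encoded by `bas : Basis β 𝕜 A` with the partition `part : β → Fin 3`,
where `0` = `B_𝔞`, `1` = `B_𝔠`, `2` = `B_1`). -/
structure GoodPair (𝕜 A β : Type) [CommRing 𝕜] [NonUnitalRing A] [Module 𝕜 A] : Type where
  ev : Submodule 𝕜 A
  od : Submodule 𝕜 A
  compl : IsCompl ev od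
  mul_ee : ∀ a ∈ ev, ∀ b ∈ ev, a * b ∈ ev
  mul_eo : ∀ a ∈ ev, ∀ b ∈ od, a * b ∈ od
  mul_oe : ∀ a ∈ od, ∀ b ∈ ev, a * b ∈ od
  mul_oo : ∀ a ∈ od, ∀ b ∈ od, a * b ∈ ev
  free_ev : Module.Free 𝕜 ev
  free_od : Module.Free 𝕜 od
  aa : Submodule 𝕜 A
  aa_le_ev : aa ≤ ev
  aa_mul : ∀ a ∈ aa, ∀ b ∈ aa, a * b ∈ aa
  free_aa : Module.Free 𝕜 aa
  free_quot : Module.Free 𝕜 (A ⧸ aa)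
  cc : Submodule 𝕜 A
  aa_inf_cc : aa ⊓ cc = ⊥
  aa_sup_cc : aa ⊔ cc = ev
  bas : Module.Basis β 𝕜 A
  part : β → Fin 3
  bas_mem_aa : ∀ i, part i = 0 → bas i ∈ aa
  bas_mem_cc : ∀ i, part i = 1 → bas i ∈ cc
  bas_mem_od : ∀ i, part i = 2 → bas i ∈ od

variable {𝕜 A β : Type} [CommRing 𝕜] [NonUnitalRing A] [Module 𝕜 A]

/-- An element is homogeneous if it lies in the even or the odd part. -/
def Homog (P : GoodPair 𝕜 A β) (a : A) : Prop := a ∈ P.ev ∨ a ∈ P.od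

/-- `H`, the set of nonzero homogeneous elements of `A`. -/
def Hset (P : GoodPair 𝕜 A β) : Set A := {a | Homog P a ∧ a ≠ 0}

/-- `⟨𝐚,𝐜⟩ = #{(k,l) : k > l, a_k odd, c_l odd}` (the Koszul sign count). -/
def koz (od : Submodule 𝕜 A) {d : ℕ} (a c : Fin d → A) : ℕ :=
  (univ.filter fun kl : Fin d × Fin d => kl.2 < kl.1 ∧ a kl.1 ∈ od ∧ c kl.2 ∈ od).card

/-- `⟨σ;𝐚⟩ = #{(k,l) : k < l, σ⁻¹k > σ⁻¹l, a_k and a_l odd}`. -/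
def sgnc (od : Submodule 𝕜 A) {d : ℕ} (σ : Equiv.Perm (Fin d)) (a : Fin d → A) : ℕ :=
  (univ.filter fun kl : Fin d × Fin d =>
    kl.1 < kl.2 ∧ σ⁻¹ kl.2 < σ⁻¹ kl.1 ∧ a kl.1 ∈ od ∧ a kl.2 ∈ od).card

/-- `⟨𝐚,𝐫,𝐬⟩ = #{(k,l) : k < l, a_k, a_l odd, (a_k,r_k,s_k) > (a_l,r_l,s_l)}` with respect to
the fixed total order `ord` on `A × [1,n] × [1,n]`. -/
def ang {n : ℕ} (od : Submodule 𝕜 A) (ord : LinearOrder (A × Fin n × Fin n))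
    {d : ℕ} (a : Fin d → A) (r s : Fin d → Fin n) : ℕ :=
  (univ.filter fun kl : Fin d × Fin d =>
    kl.1 < kl.2 ∧ a kl.1 ∈ od ∧ a kl.2 ∈ od ∧
      ord.lt (a kl.2, r kl.2, s kl.2) (a kl.1, r kl.1, s kl.1)).card

/-- `(𝐚,𝐫,𝐬) ∈ Tri^H(n,d)`: all entries are nonzero homogeneous, and a repeated entry
triple forces evenness. -/
def IsTriH (P : GoodPair 𝕜 A β) {n d : ℕ} (a : Fin d → A) (r s : Fin d → Fin n) : Prop :=
  (∀ k, a k ∈ Hset P) ∧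
    ∀ k l : Fin d, k ≠ l → (a k, r k, s k) = (a l, r l, s l) → a k ∈ P.ev

/-- `(𝐛,𝐫,𝐬) ∈ Tri^B(n,d)` for words of basis elements. -/
def IsTriB (P : GoodPair 𝕜 A β) {n d : ℕ} (b : Fin d → β) (r s : Fin d → Fin n) : Prop :=
  ∀ k l : Fin d, k ≠ l → ((b k, r k, s k) : β × Fin n × Fin n) = (b l, r l, s l) →
    P.part (b k) ≠ 2

/-- Minimal length representatives of the cosets `(S_e × S_f)\S_{e+f}`. -/
def IsShuffle (e f : ℕ) (σ : Equiv.Perm (Fin (e + f))) : Prop :=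
  (∀ k l : Fin (e + f), k < l → (l : ℕ) < e → σ⁻¹ k < σ⁻¹ l) ∧
  (∀ k l : Fin (e + f), k < l → e ≤ (k : ℕ) → σ⁻¹ k < σ⁻¹ l)

/-- The tower of superalgebras `M_n(A)^{⊗d}`, `d ≥ 0`, axiomatised.  `X a r s` is the pure
tensor `ξ^{a_1}_{r_1,s_1} ⊗ ⋯ ⊗ ξ^{a_d}_{r_d,s_d}` of matrix units; it is multilinear in the
`A`-entries, the pure tensors of basis elements form a basis, multiplication is the sign-twisted
(Koszul) componentwise one, `act` is the right action of the symmetric groups by superalgebra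
automorphisms, `evT/odT` is the induced supermodule structure, `star` is the `*`-(shuffle)
product and `nab` gives the components of the deconcatenation coproduct `∇`. -/
structure Tower (𝕜 A β : Type) [CommRing 𝕜] [NonUnitalRing A] [Module 𝕜 A]
    (n : ℕ) (T : ℕ → Type) [∀ e, NonUnitalRing (T e)] [∀ e, Module 𝕜 (T e)]
    (P : GoodPair 𝕜 A β) : Type where
  X : ∀ {e : ℕ}, (Fin e → A) → (Fin e → Fin n) → (Fin e → Fin n) → T e
  X_update_add : ∀ {e : ℕ} (a : Fin e → A) (r s : Fin e → Fin n) (k : Fin e) (x y : A),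
    X (Function.update a k (x + y)) r s
      = X (Function.update a k x) r s + X (Function.update a k y) r s
  X_update_smul : ∀ {e : ℕ} (a : Fin e → A) (r s : Fin e → Fin n) (k : Fin e) (c : 𝕜) (x : A),
    X (Function.update a k (c • x)) r s = c • X (Function.update a k x) r s
  bas : ∀ e : ℕ, Module.Basis ((Fin e → β) × (Fin e → Fin n) × (Fin e → Fin n)) 𝕜 (T e)
  bas_eq : ∀ (e : ℕ) (b : Fin e → β) (r s : Fin e → Fin n),
    bas e (b, r, s) = X (fun k => P.bas (b k)) r s
  X_mul : ∀ {e : ℕ} (a c : Fin e → A) (r s t u : Fin e → Fin n),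
    (∀ k, Homog P (a k)) → (∀ k, Homog P (c k)) →
    X a r s * X c t u
      = if s = t then ((-1 : ℤ) ^ koz P.od a c) • X (fun k => a k * c k) r u else 0
  act : ∀ {e : ℕ}, Equiv.Perm (Fin e) → T e →ₗ[𝕜] T e
  act_act : ∀ {e : ℕ} (σ τ : Equiv.Perm (Fin e)) (x : T e), act τ (act σ x) = act (σ * τ) x
  act_mul : ∀ {e : ℕ} (σ : Equiv.Perm (Fin e)) (x y : T e), act σ (x * y) = act σ x * act σ y
  act_X : ∀ {e : ℕ} (σ : Equiv.Perm (Fin e)) (a : Fin e → A) (r s : Fin e → Fin n),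
    (∀ k, Homog P (a k)) →
    act σ (X a r s) = ((-1 : ℤ) ^ sgnc P.od σ a) • X (a ∘ σ) (r ∘ σ) (s ∘ σ)
  evT : ∀ e : ℕ, Submodule 𝕜 (T e)
  odT : ∀ e : ℕ, Submodule 𝕜 (T e)
  complT : ∀ e : ℕ, IsCompl (evT e) (odT e)
  X_mem_evT : ∀ {e : ℕ} (a : Fin e → A) (r s : Fin e → Fin n), (∀ k, Homog P (a k)) →
    Even (univ.filter fun k => a k ∈ P.od).card → X a r s ∈ evT e
  X_mem_odT : ∀ {e : ℕ} (a : Fin e → A) (r s : Fin e → Fin n), (∀ k, Homog P (a k)) →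
    ¬ Even (univ.filter fun k => a k ∈ P.od).card → X a r s ∈ odT e
  star : ∀ {e f : ℕ}, T e →ₗ[𝕜] T f →ₗ[𝕜] T (e + f)
  star_X : ∀ {e f : ℕ} (a : Fin e → A) (r s : Fin e → Fin n)
      (c : Fin f → A) (t u : Fin f → Fin n),
    star (X a r s) (X c t u)
      = ∑ σ ∈ univ.filter (IsShuffle e f),
          act σ (X (Fin.append a c) (Fin.append r t) (Fin.append s u))
  nab : ∀ e f : ℕ, T (e + f) →ₗ[𝕜] TensorProduct 𝕜 (T e) (T f)
  nab_X : ∀ (e f : ℕ) (a : Fin (e + f) → A) (r s : Fin (e + f) → Fin n),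
    nab e f (X a r s)
      = (X (a ∘ Fin.castAdd f) (r ∘ Fin.castAdd f) (s ∘ Fin.castAdd f))
          ⊗ₜ[𝕜] (X (a ∘ Fin.natAdd e) (r ∘ Fin.natAdd e) (s ∘ Fin.natAdd e))

variable {n : ℕ} {T : ℕ → Type} [∀ e, NonUnitalRing (T e)] [∀ e, Module 𝕜 (T e)]

/-- `ξ^𝐚_{𝐫,𝐬}`, the signed sum of the pure tensors over the `S_d`-orbit of `(𝐚,𝐫,𝐬)`. -/
def xiH {P : GoodPair 𝕜 A β} (D : Tower 𝕜 A β n T P) (ord : LinearOrder (A × Fin n × Fin n))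
    {d : ℕ} (a : Fin d → A) (r s : Fin d → Fin n) : T d :=
  ∑ w ∈ (univ.image fun σ : Equiv.Perm (Fin d) => (a ∘ σ, r ∘ σ, s ∘ σ)),
    ((-1 : ℤ) ^ (ang P.od ord a r s + ang P.od ord w.1 w.2.1 w.2.2)) • D.X w.1 w.2.1 w.2.2

/-- `ξ^𝐛_{𝐫,𝐬}` for a word `𝐛` of basis elements. -/
def xiB {P : GoodPair 𝕜 A β} (D : Tower 𝕜 A β n T P) (ord : LinearOrder (A × Fin n × Fin n))
    {d : ℕ} (b : Fin d → β) (r s : Fin d → Fin n) : T d :=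
  xiH D ord (fun k => P.bas (b k)) r s

/-- `[𝐛,𝐫,𝐬]^b_{r,s}`, the multiplicity of an entry triple in a word triple. -/
def mco {n d : ℕ} (b : Fin d → β) (r s : Fin d → Fin n) (w : β × Fin n × Fin n) : ℕ :=
  (univ.filter fun k => ((b k, r k, s k) : β × Fin n × Fin n) = w).card

/-- `∏ ([𝐛,𝐫,𝐬]^b_{r,s})!` over the entry triples whose basis element satisfies `sel`
(e.g. `sel i = (part i = 1)` gives `[𝐛,𝐫,𝐬]^!_𝔠`). -/
def facSel (sel : β → Prop) {n d : ℕ} (b : Fin d → β) (r s : Fin d → Fin n) : ℕ :=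
  ∏ w ∈ ((univ.image fun k => ((b k, r k, s k) : β × Fin n × Fin n)).filter fun w => sel w.1),
    Nat.factorial (mco b r s w)

/-- `η^𝐛_{𝐫,𝐬} := [𝐛,𝐫,𝐬]^!_𝔠 • ξ^𝐛_{𝐫,𝐬}`. -/
def eta {P : GoodPair 𝕜 A β} (D : Tower 𝕜 A β n T P) (ord : LinearOrder (A × Fin n × Fin n))
    {d : ℕ} (b : Fin d → β) (r s : Fin d → Fin n) : T d :=
  facSel (fun i => P.part i = 1) b r s • xiB D ord b r s

/-- `S^A(n,d) = (M_n(A)^{⊗d})^{S_d}`, the invariants. -/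
def SchurS {P : GoodPair 𝕜 A β} (D : Tower 𝕜 A β n T P) (d : ℕ) : Submodule 𝕜 (T d) where
  carrier := {x | ∀ σ : Equiv.Perm (Fin d), D.act σ x = x}
  add_mem' := by
    intro x y hx hy σ
    rw [map_add, hx σ, hy σ]
  zero_mem' := by
    intro σ; exact map_zero _
  smul_mem' := by
    intro c x hx σ
    rw [map_smul, hx σ]

/-- The generalized Schur algebra `T^A_𝔞(n,d)`, the `𝕜`-span of the `η^𝐛_{𝐫,𝐬}`,
`(𝐛,𝐫,𝐬) ∈ Tri^B(n,d)`. -/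
def SchurT {P : GoodPair 𝕜 A β} (D : Tower 𝕜 A β n T P) (ord : LinearOrder (A × Fin n × Fin n))
    (d : ℕ) : Submodule 𝕜 (T d) :=
  Submodule.span 𝕜 {x | ∃ b r s, IsTriB P b r s ∧ x = eta D ord b r s}

/-- `S^𝔞(n,d) = (M_n(𝔞)^{⊗d})^{S_d} ⊆ S^A(n,d)`. -/
def SchurA {P : GoodPair 𝕜 A β} (D : Tower 𝕜 A β n T P) (d : ℕ) : Submodule 𝕜 (T d) :=
  Submodule.span 𝕜 {x | ∃ a r s, (∀ k, a k ∈ P.aa) ∧ x = D.X a r s} ⊓ SchurS D d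

/-- `ξ^f = E^f ⊗ ⋯ ⊗ E^f` for `f ∈ A`. -/
def xiIdem {P : GoodPair 𝕜 A β} (D : Tower 𝕜 A β n T P) (f : A) (d : ℕ) : T d :=
  ∑ r : Fin d → Fin n, D.X (fun _ => f) r r

/-- Transport along an equality of degrees. -/
def tcast {e f : ℕ} (h : e = f) : T e ≃ₗ[𝕜] T f := by
  subst h; exact LinearEquiv.refl 𝕜 (T e)

/-- Iterated `*`-product `x_1 * x_2 * ⋯ * x_d` of degree-one pure tensors read off from a
word (associated to the left). -/
def starIter {P : GoodPair 𝕜 A β} (D : Tower 𝕜 A β n T P) :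
    ∀ (e : ℕ), (Fin e → A) → (Fin e → Fin n) → (Fin e → Fin n) → T e
  | 0, _, _, _ => D.X Fin.elim0 Fin.elim0 Fin.elim0
  | (e + 1), a, r, s =>
      D.star (starIter D e (a ∘ Fin.castSucc) (r ∘ Fin.castSucc) (s ∘ Fin.castSucc))
        (D.X (fun _ : Fin 1 => a (Fin.last e)) (fun _ => r (Fin.last e)) (fun _ => s (Fin.last e)))

/-- Iterated `*`-product of blockwise given elements. -/
def starBlocks {P : GoodPair 𝕜 A β} (D : Tower 𝕜 A β n T P) :
    ∀ (q : ℕ) (sz : Fin q → ℕ), (∀ m, T (sz m)) → T (∑ m, sz m)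
  | 0, sz, _ => cast (congrArg T (Fin.sum_univ_zero sz).symm) (D.X Fin.elim0 Fin.elim0 Fin.elim0)
  | (q + 1), sz, x =>
      cast (congrArg T (Fin.sum_univ_castSucc sz).symm)
        (D.star (starBlocks D q (fun m => sz m.castSucc) (fun m => x m.castSucc))
          (x (Fin.last q)))

/-- Concatenation of a tuple of words of lengths `sz 0, …, sz (q-1)`. -/
def concatB {α : Type} : ∀ {q : ℕ} (sz : Fin q → ℕ), (∀ m, Fin (sz m) → α) → Fin (∑ m, sz m) → α
  | 0, sz, _ => fun k => Fin.elim0 (cast (congrArg Fin (Fin.sum_univ_zero sz)) k)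
  | (q + 1), sz, f => fun k =>
      Fin.append (concatB (fun m => sz m.castSucc) (fun m => f m.castSucc)) (f (Fin.last q))
        (cast (congrArg Fin (Fin.sum_univ_castSucc sz)) k)

/-- A triple of words `(𝐛,𝐫,𝐬)`. -/
abbrev WordTriple (β : Type) (n d : ℕ) : Type :=
  (Fin d → β) × (Fin d → Fin n) × (Fin d → Fin n)

/-- The diagonal right place-permutation action on triples of words. -/
def wAct {d : ℕ} (w : WordTriple β n d) (σ : Equiv.Perm (Fin d)) : WordTriple β n d :=
  (w.1 ∘ σ, w.2.1 ∘ σ, w.2.2 ∘ σ)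

/-- The `k`-th entry triple `(b_k, r_k, s_k)` (with `b_k` realized in `A`). -/
def entryAt (P : GoodPair 𝕜 A β) {n d : ℕ} (w : WordTriple β n d) (k : Fin d) :
    A × Fin n × Fin n :=
  (P.bas (w.1 k), w.2.1 k, w.2.2 k)

/-- The lexicographic order on triples of words induced by the total order `ord`. -/
def wordLE (P : GoodPair 𝕜 A β) {n : ℕ} (ord : LinearOrder (A × Fin n × Fin n)) {d : ℕ}
    (w w' : WordTriple β n d) : Prop :=
  (∀ k, entryAt P w k = entryAt P w' k) ∨
    ∃ l : Fin d, (∀ k, k < l → entryAt P w k = entryAt P w' k) ∧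
      ord.lt (entryAt P w l) (entryAt P w' l)

/-- `Tri^B_0(n,d)`: the lexicographically minimal representatives of the `S_d`-orbits on
`Tri^B(n,d)`. -/
def IsTri0 (P : GoodPair 𝕜 A β) {n : ℕ} (ord : LinearOrder (A × Fin n × Fin n)) {d : ℕ}
    (w : WordTriple β n d) : Prop :=
  IsTriB P w.1 w.2.1 w.2.2 ∧ ∀ σ : Equiv.Perm (Fin d), wordLE P ord w (wAct w σ)

/-- The first `l` letters of each word. -/
def firstW {d : ℕ} (l : ℕ) (hl : l ≤ d) (w : WordTriple β n d) : WordTriple β n l :=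
  (fun k => w.1 ⟨k, lt_of_lt_of_le k.isLt hl⟩,
   fun k => w.2.1 ⟨k, lt_of_lt_of_le k.isLt hl⟩,
   fun k => w.2.2 ⟨k, lt_of_lt_of_le k.isLt hl⟩)

/-- The last `d - l` letters of each word. -/
def lastW {d : ℕ} (l : ℕ) (hl : l ≤ d) (w : WordTriple β n d) : WordTriple β n (d - l) :=
  (fun k => w.1 ⟨l + (k : ℕ), by have := k.isLt; omega⟩,
   fun k => w.2.1 ⟨l + (k : ℕ), by have := k.isLt; omega⟩,
   fun k => w.2.2 ⟨l + (k : ℕ), by have := k.isLt; omega⟩)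

/-- Concatenation of words. -/
def appF {α : Type} {d : ℕ} (l : ℕ) (hl : l ≤ d) (f : Fin l → α) (g : Fin (d - l) → α) :
    Fin d → α :=
  fun k => if hk : (k : ℕ) < l then f ⟨k, hk⟩ else g ⟨(k : ℕ) - l, by have := k.isLt; omega⟩

/-- Concatenation `T¹T²` of two triples of words. -/
def concatW {d : ℕ} (l : ℕ) (hl : l ≤ d) (p : WordTriple β n l × WordTriple β n (d - l)) :
    WordTriple β n d :=
  (appF l hl p.1.1 p.2.1, appF l hl p.1.2.1 p.2.2.1, appF l hl p.1.2.2 p.2.2.2)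

/-- `Spl_l(T)`, the set of `l`-splits of `T ∈ Tri^B_0(n,d)`. -/
def splitsF (P : GoodPair 𝕜 A β) {n : ℕ} (ord : LinearOrder (A × Fin n × Fin n)) {d : ℕ}
    (l : ℕ) (hl : l ≤ d) (w : WordTriple β n d) :
    Finset (WordTriple β n l × WordTriple β n (d - l)) :=
  (univ.image fun σ : Equiv.Perm (Fin d) =>
      (firstW l hl (wAct w σ), lastW l hl (wAct w σ))).filter
    fun p => IsTri0 P ord p.1 ∧ IsTri0 P ord p.2

/-- The number of inversions (= Coxeter length) of a permutation. -/
def invCount {d : ℕ} (σ : Equiv.Perm (Fin d)) : ℕ :=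
  (univ.filter fun kl : Fin d × Fin d => kl.1 < kl.2 ∧ σ kl.2 < σ kl.1).card

/-- The submodule `{x | x·ε = x}` (for an idempotent `ε` this is `R·ε`). -/
def rfix (𝕜 : Type) {R : Type} [CommRing 𝕜] [NonUnitalRing R] [Module 𝕜 R]
    [IsScalarTower 𝕜 R R] (ε : R) : Submodule 𝕜 R where
  carrier := {x | x * ε = x}
  add_mem' := by
    intro x y hx hy
    simp only [Set.mem_setOf_eq] at *
    rw [add_mul, hx, hy]
  zero_mem' := by simp
  smul_mem' := by
    intro c x hx
    simp only [Set.mem_setOf_eq] at *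
    rw [smul_mul_assoc, hx]

/-- Right `εSε`-module endomorphism property for a map of `S·ε = M ⊓ rfix ε`,
where `S` is the (possibly non-unital) algebra realized as the submodule `M` of `R`. -/
def IsEquivar (𝕜 : Type) {R : Type} [CommRing 𝕜] [NonUnitalRing R] [Module 𝕜 R]
    [IsScalarTower 𝕜 R R] (M : Submodule 𝕜 R) (ε : R)
    (f : ↥(M ⊓ rfix 𝕜 ε) →ₗ[𝕜] ↥(M ⊓ rfix 𝕜 ε)) : Prop :=
  ∀ (x : ↥(M ⊓ rfix 𝕜 ε)) (c : R), c ∈ M → ε * c * ε = c →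
    ∀ h : (x : R) * c ∈ M ⊓ rfix 𝕜 ε,
      ((f ⟨(x : R) * c, h⟩ : ↥(M ⊓ rfix 𝕜 ε)) : R) = (f x : R) * c

/-- `ε` is a *double centralizer idempotent* for the algebra `M ⊆ R`: the left
multiplication map `λ : M → End_{εMε}(Mε)` is bijective. -/
def IsDCI (𝕜 : Type) {R : Type} [CommRing 𝕜] [NonUnitalRing R] [Module 𝕜 R]
    [IsScalarTower 𝕜 R R] (M : Submodule 𝕜 R) (ε : R) : Prop :=
  (∀ s ∈ M, ∀ s' ∈ M, (∀ x ∈ M ⊓ rfix 𝕜 ε, s * x = s' * x) → s = s') ∧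
  (∀ f : ↥(M ⊓ rfix 𝕜 ε) →ₗ[𝕜] ↥(M ⊓ rfix 𝕜 ε), IsEquivar 𝕜 M ε f →
    ∃ s ∈ M, ∀ x : ↥(M ⊓ rfix 𝕜 ε), (f x : R) = s * (x : R))

section combi

/-- Sorted words. -/
def WMono (P : GoodPair 𝕜 A β) (ord : LinearOrder (A × Fin n × Fin n)) {d : ℕ}
    (w : WordTriple β n d) : Prop :=
  ∀ i j, i ≤ j → ord.le (entryAt P w i) (entryAt P w j)

/-- The sorted word in the orbit. -/
def srt (P : GoodPair 𝕜 A β) (ord : LinearOrder (A × Fin n × Fin n)) {d : ℕ}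
    (w : WordTriple β n d) : WordTriple β n d :=
  wAct w (letI := ord; Tuple.sort (entryAt P w))

/-- The orbit of a word. -/
def orb {d : ℕ} (w : WordTriple β n d) : Finset (WordTriple β n d) :=
  univ.image fun σ : Equiv.Perm (Fin d) => wAct w σ

lemma mem_orb {d : ℕ} (w v : WordTriple β n d) : v ∈ orb w ↔ ∃ σ, wAct w σ = v := by
  simp [orb]

lemma wAct_mul {d : ℕ} (w : WordTriple β n d) (σ τ : Equiv.Perm (Fin d)) :
    wAct (wAct w σ) τ = wAct w (σ * τ) := rfl

lemma wAct_one {d : ℕ} (w : WordTriple β n d) : wAct w 1 = w := rfl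

lemma wAct_inj {d : ℕ} {w v : WordTriple β n d} {σ : Equiv.Perm (Fin d)}
    (h : wAct w σ = wAct v σ) : w = v := by
  have := congrArg (fun u => wAct u σ⁻¹) h
  simpa [wAct_mul, wAct_one] using this

lemma entryAt_wAct (P : GoodPair 𝕜 A β) {d : ℕ} (w : WordTriple β n d) (σ : Equiv.Perm (Fin d)) :
    entryAt P (wAct w σ) = entryAt P w ∘ σ := rfl

lemma entryAt_inj [Nontrivial 𝕜] (P : GoodPair 𝕜 A β) {d : ℕ} {w v : WordTriple β n d}
    (h : entryAt P w = entryAt P v) : w = v := by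
  have h' : ∀ k, entryAt P w k = entryAt P v k := fun k => congrFun h k
  simp only [entryAt, Prod.mk.injEq] at h'
  refine Prod.ext ?_ (Prod.ext ?_ ?_)
  · funext k; exact P.bas.injective (h' k).1
  · funext k; exact (h' k).2.1
  · funext k; exact (h' k).2.2

lemma srt_mono (P : GoodPair 𝕜 A β) (ord : LinearOrder (A × Fin n × Fin n)) {d : ℕ}
    (w : WordTriple β n d) : WMono P ord (srt P ord w) := by
  let _ := ord
  have := Tuple.monotone_sort (entryAt P w)
  intro i j hij
  exact this hij

lemma mono_unique [Nontrivial 𝕜] (P : GoodPair 𝕜 A β) (ord : LinearOrder (A × Fin n × Fin n))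
    {d : ℕ} (w : WordTriple β n d) (σ τ : Equiv.Perm (Fin d))
    (h1 : WMono P ord (wAct w σ)) (h2 : WMono P ord (wAct w τ)) : wAct w σ = wAct w τ := by
  let _ := ord
  apply entryAt_inj P
  rw [entryAt_wAct, entryAt_wAct]
  apply Tuple.unique_monotone
  · intro i j hij; exact h1 i j hij
  · intro i j hij; exact h2 i j hij

lemma srt_wAct [Nontrivial 𝕜] (P : GoodPair 𝕜 A β) (ord : LinearOrder (A × Fin n × Fin n))
    {d : ℕ} (w : WordTriple β n d) (σ : Equiv.Perm (Fin d)) (h : WMono P ord w) :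
    srt P ord (wAct w σ) = w := by
  have h1 := srt_mono P ord (wAct w σ)
  rw [srt, wAct_mul] at *
  have := mono_unique P ord w _ 1 h1 h
  simpa [wAct_one] using this

lemma mem_orb_srt (P : GoodPair 𝕜 A β) (ord : LinearOrder (A × Fin n × Fin n))
    {d : ℕ} (w : WordTriple β n d) : w ∈ orb (srt P ord w) := by
  rw [mem_orb]
  refine ⟨(letI := ord; Tuple.sort (entryAt P w))⁻¹, ?_⟩
  rw [srt, wAct_mul]; simp [wAct_one]

lemma isTriB_wAct (P : GoodPair 𝕜 A β) {d : ℕ} (w : WordTriple β n d) (σ : Equiv.Perm (Fin d))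
    (h : IsTriB P w.1 w.2.1 w.2.2) :
    IsTriB P (wAct w σ).1 (wAct w σ).2.1 (wAct w σ).2.2 := by
  intro k l hkl he
  exact h (σ k) (σ l) (fun h => hkl (σ.injective h)) he

lemma mono_of_min (P : GoodPair 𝕜 A β) (ord : LinearOrder (A × Fin n × Fin n)) {d : ℕ}
    (w : WordTriple β n d) (h : ∀ σ, wordLE P ord w (wAct w σ)) : WMono P ord w := by
  let _ := ord
  intro i j hij
  by_contra hc
  have hlt : entryAt P w j < entryAt P w i := not_le.mp hc
  have hne : i ≠ j := by rintro rfl; exact lt_irrefl _ hlt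
  have hi : entryAt P (wAct w (Equiv.swap i j)) i = entryAt P w j := by
    simp [entryAt_wAct]
  rcases h (Equiv.swap i j) with h | ⟨l, h1, h2⟩
  · have := h i
    rw [hi] at this; rw [this] at hlt; exact lt_irrefl _ hlt
  · rcases lt_trichotomy l i with h3 | h3 | h3
    · have : entryAt P (wAct w (Equiv.swap i j)) l = entryAt P w l := by
        rw [entryAt_wAct, Function.comp, Equiv.swap_apply_of_ne_of_ne (ne_of_lt h3)
          (ne_of_lt (lt_of_lt_of_le h3 hij))]
      rw [this] at h2; exact lt_irrefl _ h2
    · subst h3; rw [hi] at h2; exact lt_asymm h2 hlt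
    · have := h1 i h3
      rw [hi] at this; rw [this] at hlt; exact lt_irrefl _ hlt

lemma min_of_mono (P : GoodPair 𝕜 A β) (ord : LinearOrder (A × Fin n × Fin n)) {d : ℕ}
    (w : WordTriple β n d) (h : WMono P ord w) (σ : Equiv.Perm (Fin d)) :
    wordLE P ord w (wAct w σ) := by
  let _ := ord
  by_cases hall : ∀ k, entryAt P w k = entryAt P (wAct w σ) k
  · exact Or.inl hall
  right
  push Not at hall
  have hne : (univ.filter fun k => entryAt P w k ≠ entryAt P (wAct w σ) k).Nonempty := by
    obtain ⟨k, hk⟩ := hall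
    exact ⟨k, by simpa using hk⟩
  obtain ⟨l, hl, hmin⟩ := Finset.exists_minimal hne
  simp only [Finset.mem_filter, Finset.mem_univ, true_and] at hl hmin
  have hbef : ∀ k, k < l → entryAt P w k = entryAt P (wAct w σ) k := by
    intro k hk
    by_contra hc
    exact absurd (hmin hc hk.le) (not_le.mpr hk)
  refine ⟨l, hbef, ?_⟩
  by_contra hc
  have hlt : entryAt P (wAct w σ) l < entryAt P w l :=
    lt_of_le_of_ne (not_lt.mp hc) (Ne.symm hl)
  set v := entryAt P w l with hv
  let S := univ.filter fun k => entryAt P w k < v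
  let S' := univ.filter fun k => entryAt P (wAct w σ) k < v
  have hcard : S'.card = S.card := by
    apply Finset.card_bij (fun k _ => σ k)
    · intro k hk
      simp only [S', Finset.mem_filter, Finset.mem_univ, true_and] at hk
      simp only [S, Finset.mem_filter, Finset.mem_univ, true_and]
      exact hk
    · intro a _ b _ hab; exact σ.injective hab
    · intro b hb; refine ⟨σ⁻¹ b, ?_, by simp⟩
      simp only [S, Finset.mem_filter, Finset.mem_univ, true_and] at hb
      simp only [S', Finset.mem_filter, Finset.mem_univ, true_and]
      simpa [entryAt_wAct] using hb
  have hlS : l ∉ S := by simp [S, hv]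
  have hsub : insert l S ⊆ S' := by
    intro k hk
    rw [Finset.mem_insert] at hk
    rcases hk with rfl | hk
    · simpa [S'] using hlt
    · simp only [S, Finset.mem_filter, Finset.mem_univ, true_and] at hk
      have hkl : k < l := by
        by_contra hc
        exact absurd (h l k (not_lt.mp hc)) (not_le.mpr hk)
      simp only [S', Finset.mem_filter, Finset.mem_univ, true_and]
      rw [← hbef k hkl]; exact hk
  have := Finset.card_le_card hsub
  rw [Finset.card_insert_of_notMem hlS] at this
  omega

lemma isTri0_iff (P : GoodPair 𝕜 A β) (ord : LinearOrder (A × Fin n × Fin n)) {d : ℕ}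
    (w : WordTriple β n d) :
    IsTri0 P ord w ↔ IsTriB P w.1 w.2.1 w.2.2 ∧ WMono P ord w :=
  ⟨fun h => ⟨h.1, mono_of_min P ord w h.2⟩, fun h => ⟨h.1, min_of_mono P ord w h.2⟩⟩

/-- `ang` of a word. -/
def angW (P : GoodPair 𝕜 A β) (ord : LinearOrder (A × Fin n × Fin n)) {d : ℕ}
    (w : WordTriple β n d) : ℕ :=
  ang P.od ord (fun k => P.bas (w.1 k)) w.2.1 w.2.2

lemma angW_mono (P : GoodPair 𝕜 A β) (ord : LinearOrder (A × Fin n × Fin n)) {d : ℕ}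
    (w : WordTriple β n d) (h : WMono P ord w) : angW P ord w = 0 := by
  let _ := ord
  rw [angW, ang, Finset.card_eq_zero, Finset.filter_eq_empty_iff]
  rintro ⟨i, j⟩ _ ⟨h1, _, _, h4⟩
  exact absurd (h i j h1.le) (not_le.mpr h4)

lemma bas_homog (P : GoodPair 𝕜 A β) (i : β) : Homog P (P.bas i) := by
  have h3 : ∀ x : Fin 3, x = 0 ∨ x = 1 ∨ x = 2 := by decide
  rcases h3 (P.part i) with h | h | h
  · exact Or.inl (P.aa_le_ev (P.bas_mem_aa i h))
  · left; rw [← P.aa_sup_cc]; exact Submodule.mem_sup_right (P.bas_mem_cc i h)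
  · exact Or.inr (P.bas_mem_od i h)

lemma part_of_od [Nontrivial 𝕜] (P : GoodPair 𝕜 A β) (i : β) (h : P.bas i ∈ P.od) :
    P.part i = 2 := by
  by_contra hc
  have hev : P.bas i ∈ P.ev := by
    have h3 : ∀ x : Fin 3, x = 0 ∨ x = 1 ∨ x = 2 := by decide
    rcases h3 (P.part i) with h | h | h
    · exact (P.aa_le_ev (P.bas_mem_aa i h))
    · rw [← P.aa_sup_cc]; exact Submodule.mem_sup_right (P.bas_mem_cc i h)
    · exact absurd h hc
  have := Submodule.disjoint_def.mp P.compl.disjoint _ hev h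
  exact P.bas.ne_zero i this

lemma od_inj [Nontrivial 𝕜] (P : GoodPair 𝕜 A β) {d : ℕ} (w : WordTriple β n d)
    (h : IsTriB P w.1 w.2.1 w.2.2) (k l : Fin d) (hkl : k ≠ l) (ho : P.bas (w.1 k) ∈ P.od) :
    entryAt P w k ≠ entryAt P w l := by
  intro he
  simp only [entryAt, Prod.mk.injEq] at he
  exact h k l hkl (by rw [P.bas.injective he.1, he.2.1, he.2.2]) (part_of_od P _ ho)

/-- `sgnc` of a word. -/
def sgnW (P : GoodPair 𝕜 A β) {d : ℕ} (σ : Equiv.Perm (Fin d)) (w : WordTriple β n d) : ℕ :=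
  sgnc P.od σ (fun k => P.bas (w.1 k))

lemma angW_wAct [Nontrivial 𝕜] (P : GoodPair 𝕜 A β) (ord : LinearOrder (A × Fin n × Fin n))
    {d : ℕ} (w : WordTriple β n d) (σ : Equiv.Perm (Fin d)) (h : IsTriB P w.1 w.2.1 w.2.2) :
    ∃ c, angW P ord (wAct w σ) + 2 * c = angW P ord w + sgnW P σ w := by
  let _ := ord
  let o : Fin d → Prop := fun k => P.bas (w.1 k) ∈ P.od
  let e := entryAt P w
  have hinj : ∀ k l, k ≠ l → o k → e k ≠ e l := od_inj P w h
  let C := univ.filter fun kl : Fin d × Fin d =>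
    kl.1 < kl.2 ∧ σ⁻¹ kl.2 < σ⁻¹ kl.1 ∧ o kl.1 ∧ o kl.2 ∧ e kl.2 < e kl.1
  let S1 := univ.filter fun kl : Fin d × Fin d =>
    kl.1 < kl.2 ∧ σ⁻¹ kl.1 < σ⁻¹ kl.2 ∧ o kl.1 ∧ o kl.2 ∧ e kl.2 < e kl.1
  let S2 := univ.filter fun kl : Fin d × Fin d =>
    kl.1 < kl.2 ∧ σ⁻¹ kl.2 < σ⁻¹ kl.1 ∧ o kl.1 ∧ o kl.2 ∧ e kl.1 < e kl.2
  let R := univ.filter fun kl : Fin d × Fin d =>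
    σ⁻¹ kl.1 < σ⁻¹ kl.2 ∧ o kl.1 ∧ o kl.2 ∧ e kl.2 < e kl.1
  have hnei : ∀ k l : Fin d, k < l → σ⁻¹ k ≠ σ⁻¹ l :=
    fun k l hkl hh => hkl.ne (σ⁻¹.injective hh)
  have hA : angW P ord w = S1.card + C.card := by
    rw [← Finset.card_union_of_disjoint]
    · unfold angW ang
      congr 1
      ext ⟨k, l⟩
      simp only [S1, C, Finset.mem_filter, Finset.mem_union, Finset.mem_univ, true_and]
      constructor
      · rintro ⟨h1, h2, h3, h4⟩
        rcases lt_or_gt_of_ne (hnei k l h1) with h5 | h5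
        · exact Or.inl ⟨h1, h5, h2, h3, h4⟩
        · exact Or.inr ⟨h1, h5, h2, h3, h4⟩
      · rintro (⟨h1, h5, h2, h3, h4⟩ | ⟨h1, h5, h2, h3, h4⟩) <;> exact ⟨h1, h2, h3, h4⟩
    · rw [Finset.disjoint_left]
      rintro ⟨k, l⟩ h1 h2
      simp only [S1, C, Finset.mem_filter, Finset.mem_univ, true_and] at h1 h2
      exact lt_asymm h1.2.1 h2.2.1
  have hB : sgnW P σ w = S2.card + C.card := by
    rw [← Finset.card_union_of_disjoint]
    · unfold sgnW sgnc
      congr 1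
      ext ⟨k, l⟩
      simp only [S2, C, Finset.mem_filter, Finset.mem_union, Finset.mem_univ, true_and]
      constructor
      · rintro ⟨h1, h2, h3, h4⟩
        rcases lt_or_gt_of_ne (hinj k l h1.ne h3) with h5 | h5
        · exact Or.inl ⟨h1, h2, h3, h4, h5⟩
        · exact Or.inr ⟨h1, h2, h3, h4, h5⟩
      · rintro (⟨h1, h5, h2, h3, h4⟩ | ⟨h1, h5, h2, h3, h4⟩) <;> exact ⟨h1, h5, h2, h3⟩
    · rw [Finset.disjoint_left]
      rintro ⟨k, l⟩ h1 h2
      simp only [S2, C, Finset.mem_filter, Finset.mem_univ, true_and] at h1 h2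
      exact lt_asymm h1.2.2.2.2 h2.2.2.2.2
  have hR : angW P ord (wAct w σ) = R.card := by
    unfold angW ang
    apply Finset.card_bij (fun kl _ => (σ kl.1, σ kl.2))
    · rintro ⟨k, l⟩ hk
      simp only [Finset.mem_filter, Finset.mem_univ, true_and] at hk
      simp only [R, Finset.mem_filter, Finset.mem_univ, true_and]
      have e1 : σ⁻¹ (σ k) = k := by simp
      have e2 : σ⁻¹ (σ l) = l := by simp
      rw [e1, e2]
      exact hk
    · rintro ⟨a, b⟩ _ ⟨a', b'⟩ _ hab
      simpa using hab
    · rintro ⟨k, l⟩ hk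
      simp only [R, Finset.mem_filter, Finset.mem_univ, true_and] at hk
      refine ⟨(σ⁻¹ k, σ⁻¹ l), ?_, by simp⟩
      simp only [Finset.mem_filter, Finset.mem_univ, true_and]
      refine ⟨hk.1, ?_⟩
      have h2 := hk.2
      simpa [wAct, o, e, entryAt] using h2
  have hR2 : R.card = S1.card + S2.card := by
    have : S2.card = (S2.map (Equiv.prodComm _ _).toEmbedding).card := by simp
    rw [this, ← Finset.card_union_of_disjoint]
    · congr 1
      ext ⟨k, l⟩
      simp only [S1, S2, R, Finset.mem_filter, Finset.mem_union, Finset.mem_univ, true_and,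
        Finset.mem_map_equiv, Equiv.prodComm_symm, Equiv.prodComm_apply, Prod.swap]
      constructor
      · rintro ⟨h1, h2, h3, h4⟩
        rcases lt_trichotomy k l with h5 | h5 | h5
        · exact Or.inl ⟨h5, h1, h2, h3, h4⟩
        · subst h5; exact absurd h1 (lt_irrefl _)
        · exact Or.inr ⟨h5, h1, h3, h2, h4⟩
      · rintro (⟨h1, h5, h2, h3, h4⟩ | ⟨h1, h5, h2, h3, h4⟩)
        · exact ⟨h5, h2, h3, h4⟩
        · exact ⟨h5, h3, h2, h4⟩
    · rw [Finset.disjoint_left]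
      rintro ⟨k, l⟩ h1 h2
      simp only [S1, S2, Finset.mem_filter, Finset.mem_univ, true_and,
        Finset.mem_map_equiv, Equiv.prodComm_symm, Equiv.prodComm_apply, Prod.swap] at h1 h2
      exact lt_asymm h1.1 h2.1
  exact ⟨C.card, by omega⟩

lemma sgnW_swap (P : GoodPair 𝕜 A β) {d : ℕ} (w : WordTriple β n d) (k l : Fin d) (hkl : k < l)
    (hk : P.bas (w.1 k) ∈ P.od) (hl : P.bas (w.1 l) ∈ P.od) :
    ∃ c, sgnW P (Equiv.swap k l) w = 2 * c + 1 := by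
  let M := univ.filter fun m : Fin d => k < m ∧ m < l ∧ P.bas (w.1 m) ∈ P.od
  refine ⟨M.card, ?_⟩
  have : (univ.filter fun kl : Fin d × Fin d =>
      kl.1 < kl.2 ∧ (Equiv.swap k l)⁻¹ kl.2 < (Equiv.swap k l)⁻¹ kl.1 ∧
        P.bas (w.1 kl.1) ∈ P.od ∧ P.bas (w.1 kl.2) ∈ P.od)
      = insert (k, l) (M.image (fun m => (k, m)) ∪ M.image (fun m => (m, l))) := by
    ext ⟨i, j⟩
    simp only [M, Finset.mem_filter, Finset.mem_univ, true_and, Finset.mem_insert,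
      Finset.mem_union, Finset.mem_image, Prod.mk.injEq]
    rw [Equiv.swap_inv, Equiv.swap_apply_def, Equiv.swap_apply_def]
    constructor
    · rintro ⟨h1, h2, h3, h4⟩
      by_cases hik : i = k
      · subst hik
        by_cases hjl : j = l
        · exact Or.inl ⟨rfl, hjl⟩
        · refine Or.inr (Or.inl ⟨j, ⟨h1, ?_, h4⟩, rfl, rfl⟩)
          rw [if_neg h1.ne', if_neg hjl, if_pos rfl] at h2
          exact h2
      · by_cases hjl : j = l
        · subst hjl
          refine Or.inr (Or.inr ⟨i, ⟨?_, h1, h3⟩, rfl, rfl⟩)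
          rw [if_neg hkl.ne', if_pos rfl, if_neg hik, if_neg h1.ne] at h2
          exact h2
        · exfalso
          split_ifs at h2 <;> subst_vars <;> order
    · rintro (⟨rfl, rfl⟩ | ⟨m, ⟨h1, h2, h3⟩, rfl, rfl⟩ | ⟨m, ⟨h1, h2, h3⟩, rfl, rfl⟩)
      · simp [hkl, hk, hl, hkl.ne']
      · simp [h1, h2, h3, hk, h1.ne', h2.ne]
      · simp [h1, h2, h3, hl, h1.ne', h2.ne, hkl.ne']
  unfold sgnW sgnc
  rw [this, Finset.card_insert_of_notMem, Finset.card_union_of_disjoint,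
    Finset.card_image_of_injective, Finset.card_image_of_injective]
  · omega
  · intro a b hab; simpa using hab
  · intro a b hab; simpa using hab
  · rw [Finset.disjoint_left]
    rintro ⟨i, j⟩ h1 h2
    simp only [M, Finset.mem_image, Finset.mem_filter, Prod.mk.injEq] at h1 h2
    obtain ⟨m, hm, rfl, rfl⟩ := h1
    obtain ⟨m', hm', rfl, rfl⟩ := h2
    exact lt_irrefl _ hm.2.2.1
  · simp only [M, Finset.mem_union, Finset.mem_image, Finset.mem_filter, Prod.mk.injEq]
    rintro (⟨m, hm, _, rfl⟩ | ⟨m, hm, rfl, _⟩)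
    · exact lt_irrefl _ hm.2.2.1
    · exact lt_irrefl _ hm.2.1

end combi

section split

/-- Splitting of indices. -/
def fsE {d : ℕ} (l : ℕ) (hl : l ≤ d) : Fin l ⊕ Fin (d - l) ≃ Fin d :=
  finSumFinEquiv.trans (finCongr (by omega))

lemma fsE_inl {d : ℕ} (l : ℕ) (hl : l ≤ d) (k : Fin l) :
    fsE l hl (Sum.inl k) = ⟨k, lt_of_lt_of_le k.isLt hl⟩ := by
  ext; simp [fsE]

lemma fsE_inr {d : ℕ} (l : ℕ) (hl : l ≤ d) (k : Fin (d - l)) :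
    fsE l hl (Sum.inr k) = ⟨l + (k : ℕ), by have := k.isLt; omega⟩ := by
  ext; simp [fsE]

/-- Block permutation. -/
def cP {d : ℕ} (l : ℕ) (hl : l ≤ d) (σ : Equiv.Perm (Fin l)) (τ : Equiv.Perm (Fin (d - l))) :
    Equiv.Perm (Fin d) :=
  (fsE l hl).symm.trans ((Equiv.sumCongr σ τ).trans (fsE l hl))

lemma cP_inl {d : ℕ} (l : ℕ) (hl : l ≤ d) (σ : Equiv.Perm (Fin l))
    (τ : Equiv.Perm (Fin (d - l))) (k : Fin l) :
    cP l hl σ τ (fsE l hl (Sum.inl k)) = fsE l hl (Sum.inl (σ k)) := by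
  simp [cP]

lemma cP_inr {d : ℕ} (l : ℕ) (hl : l ≤ d) (σ : Equiv.Perm (Fin l))
    (τ : Equiv.Perm (Fin (d - l))) (k : Fin (d - l)) :
    cP l hl σ τ (fsE l hl (Sum.inr k)) = fsE l hl (Sum.inr (τ k)) := by
  simp [cP]

lemma firstW_eq {d : ℕ} (l : ℕ) (hl : l ≤ d) (w : WordTriple β n d) :
    firstW l hl w = (fun k => w.1 (fsE l hl (Sum.inl k)), fun k => w.2.1 (fsE l hl (Sum.inl k)),
      fun k => w.2.2 (fsE l hl (Sum.inl k))) := by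
  simp only [fsE_inl]; rfl

lemma lastW_eq {d : ℕ} (l : ℕ) (hl : l ≤ d) (w : WordTriple β n d) :
    lastW l hl w = (fun k => w.1 (fsE l hl (Sum.inr k)), fun k => w.2.1 (fsE l hl (Sum.inr k)),
      fun k => w.2.2 (fsE l hl (Sum.inr k))) := by
  simp only [fsE_inr]; rfl

lemma firstW_cP {d : ℕ} (l : ℕ) (hl : l ≤ d) (w : WordTriple β n d) (σ : Equiv.Perm (Fin l))
    (τ : Equiv.Perm (Fin (d - l))) :
    firstW l hl (wAct w (cP l hl σ τ)) = wAct (firstW l hl w) σ := by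
  simp only [firstW_eq, wAct, Function.comp_apply, cP_inl]; rfl

lemma lastW_cP {d : ℕ} (l : ℕ) (hl : l ≤ d) (w : WordTriple β n d) (σ : Equiv.Perm (Fin l))
    (τ : Equiv.Perm (Fin (d - l))) :
    lastW l hl (wAct w (cP l hl σ τ)) = wAct (lastW l hl w) τ := by
  simp only [lastW_eq, wAct, Function.comp_apply, cP_inr]; rfl

lemma appF_fl {α : Type} {d : ℕ} (l : ℕ) (hl : l ≤ d) (f : Fin d → α) :
    appF l hl (fun k => f ⟨k, lt_of_lt_of_le k.isLt hl⟩)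
      (fun k => f ⟨l + (k : ℕ), by have := k.isLt; omega⟩) = f := by
  funext k
  unfold appF
  split_ifs with h
  · rfl
  · exact congrArg f (Fin.ext (by simp; omega))

lemma concatW_fl {d : ℕ} (l : ℕ) (hl : l ≤ d) (w : WordTriple β n d) :
    concatW l hl (firstW l hl w, lastW l hl w) = w := by
  unfold concatW firstW lastW
  simp only [appF_fl]

lemma firstW_concatW {d : ℕ} (l : ℕ) (hl : l ≤ d)
    (p : WordTriple β n l × WordTriple β n (d - l)) : firstW l hl (concatW l hl p) = p.1 := by
  simp [firstW, concatW, appF]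

lemma lastW_concatW {d : ℕ} (l : ℕ) (hl : l ≤ d)
    (p : WordTriple β n l × WordTriple β n (d - l)) : lastW l hl (concatW l hl p) = p.2 := by
  simp [lastW, concatW, appF]

lemma isTriB_firstW (P : GoodPair 𝕜 A β) {d : ℕ} (l : ℕ) (hl : l ≤ d) (w : WordTriple β n d)
    (h : IsTriB P w.1 w.2.1 w.2.2) :
    IsTriB P (firstW l hl w).1 (firstW l hl w).2.1 (firstW l hl w).2.2 := by
  rw [firstW_eq]
  intro i j hij he
  exact h _ _ (fun hh => hij (Sum.inl_injective ((fsE l hl).injective hh))) he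

lemma isTriB_lastW (P : GoodPair 𝕜 A β) {d : ℕ} (l : ℕ) (hl : l ≤ d) (w : WordTriple β n d)
    (h : IsTriB P w.1 w.2.1 w.2.2) :
    IsTriB P (lastW l hl w).1 (lastW l hl w).2.1 (lastW l hl w).2.2 := by
  rw [lastW_eq]
  intro i j hij he
  exact h _ _ (fun hh => hij (Sum.inr_injective ((fsE l hl).injective hh))) he

/-- Cross inversions. -/
def crs (P : GoodPair 𝕜 A β) (ord : LinearOrder (A × Fin n × Fin n)) {l m : ℕ}
    (u : WordTriple β n l) (v : WordTriple β n m) : ℕ :=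
  ∑ i : Fin l, ∑ j : Fin m, if P.bas (u.1 i) ∈ P.od ∧ P.bas (v.1 j) ∈ P.od ∧
      ord.lt (entryAt P v j) (entryAt P u i) then 1 else 0

lemma crs_wAct (P : GoodPair 𝕜 A β) (ord : LinearOrder (A × Fin n × Fin n)) {l m : ℕ}
    (u : WordTriple β n l) (v : WordTriple β n m) (σ : Equiv.Perm (Fin l))
    (τ : Equiv.Perm (Fin m)) : crs P ord (wAct u σ) (wAct v τ) = crs P ord u v := by
  unfold crs
  refine Fintype.sum_equiv σ _ _ fun i => ?_
  refine Fintype.sum_equiv τ _ _ fun j => ?_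
  rfl

lemma angW_split (P : GoodPair 𝕜 A β) (ord : LinearOrder (A × Fin n × Fin n)) {d : ℕ} (l : ℕ)
    (hl : l ≤ d) (w : WordTriple β n d) :
    angW P ord w = angW P ord (firstW l hl w) + angW P ord (lastW l hl w)
      + crs P ord (firstW l hl w) (lastW l hl w) := by
  have h1 : ∀ i j : Fin l, fsE l hl (Sum.inl i) < fsE l hl (Sum.inl j) ↔ i < j := by
    intro i j; rw [fsE_inl, fsE_inl]; simp
  have h2 : ∀ i j : Fin (d - l), fsE l hl (Sum.inr i) < fsE l hl (Sum.inr j) ↔ i < j := by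
    intro i j; rw [fsE_inr, fsE_inr]; simp
  have h3 : ∀ i j, fsE l hl (Sum.inl i) < fsE l hl (Sum.inr j) ↔ True := by
    intro i j; rw [fsE_inl, fsE_inr]; simp; omega
  have h4 : ∀ i j, fsE l hl (Sum.inr i) < fsE l hl (Sum.inl j) ↔ False := by
    intro i j; rw [fsE_inl, fsE_inr]; simp; omega
  simp only [angW, ang, crs, Finset.card_filter, Fintype.sum_prod_type, firstW_eq, lastW_eq,
    entryAt]
  rw [← Equiv.sum_comp (fsE l hl), Fintype.sum_sum_type]
  simp only [← Equiv.sum_comp (fsE l hl) (fun k => ite _ _ _), Fintype.sum_sum_type, h1, h2, h3, h4, Finset.sum_add_distrib, true_and,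
    false_and, if_false, Finset.sum_const_zero]
  ring

end split

section alg

/-- Pure tensors of basis words. -/
def XB {P : GoodPair 𝕜 A β} (D : Tower 𝕜 A β n T P) {d : ℕ} (w : WordTriple β n d) : T d :=
  D.X (fun k => P.bas (w.1 k)) w.2.1 w.2.2

lemma bas_XB {P : GoodPair 𝕜 A β} (D : Tower 𝕜 A β n T P) {d : ℕ} (w : WordTriple β n d) :
    D.bas d w = XB D w := D.bas_eq d w.1 w.2.1 w.2.2

/-- `xiB` of a word. -/
def xiW {P : GoodPair 𝕜 A β} (D : Tower 𝕜 A β n T P) (ord : LinearOrder (A × Fin n × Fin n))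
    {d : ℕ} (w : WordTriple β n d) : T d := xiB D ord w.1 w.2.1 w.2.2

lemma xiW_eq [Nontrivial 𝕜] {P : GoodPair 𝕜 A β} (D : Tower 𝕜 A β n T P)
    (ord : LinearOrder (A × Fin n × Fin n)) {d : ℕ} (w : WordTriple β n d) :
    xiW D ord w = ∑ v ∈ orb w, ((-1 : ℤ) ^ (angW P ord w + angW P ord v)) • XB D v := by
  let ι : WordTriple β n d → (Fin d → A) × (Fin d → Fin n) × (Fin d → Fin n) :=
    fun v => (fun k => P.bas (v.1 k), v.2.1, v.2.2)
  have hι : Function.Injective ι := by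
    intro u v h
    simp only [ι, Prod.mk.injEq] at h
    refine Prod.ext ?_ (Prod.ext h.2.1 h.2.2)
    funext k; exact P.bas.injective (congrFun h.1 k)
  have : (univ.image fun σ : Equiv.Perm (Fin d) =>
      ((fun k => P.bas (w.1 k)) ∘ σ, w.2.1 ∘ σ, w.2.2 ∘ σ)) = (orb w).image ι := by
    rw [orb, Finset.image_image]; rfl
  unfold xiW xiB xiH
  rw [this, Finset.sum_image (fun a _ b _ h => hι h)]
  rfl

lemma tcast_X {P : GoodPair 𝕜 A β} (D : Tower 𝕜 A β n T P) {d l m : ℕ} (h : d = l + m)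
    (a : Fin d → A) (r s : Fin d → Fin n) :
    D.nab l m (tcast (𝕜 := 𝕜) h (D.X a r s)) =
      D.X (fun k : Fin l => a ⟨k, by omega⟩) (fun k : Fin l => r ⟨k, by omega⟩)
        (fun k : Fin l => s ⟨k, by omega⟩) ⊗ₜ[𝕜]
      D.X (fun k : Fin m => a ⟨l + k, by omega⟩) (fun k : Fin m => r ⟨l + k, by omega⟩)
        (fun k : Fin m => s ⟨l + k, by omega⟩) := by
  subst h
  exact D.nab_X l m a r s

lemma nab_XB {P : GoodPair 𝕜 A β} (D : Tower 𝕜 A β n T P) {d l : ℕ} (hl : l ≤ d)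
    (h : d = l + (d - l)) (w : WordTriple β n d) :
    D.nab l (d - l) (tcast (𝕜 := 𝕜) h (XB D w)) =
      XB D (firstW l hl w) ⊗ₜ[𝕜] XB D (lastW l hl w) :=
  tcast_X D h _ _ _

lemma sgn_tmul {M N : Type} [AddCommGroup M] [AddCommGroup N] [Module 𝕜 M] [Module 𝕜 N]
    (a b : ℕ) (x : M) (y : N) :
    (((-1 : ℤ) ^ a) • x) ⊗ₜ[𝕜] (((-1 : ℤ) ^ b) • y) = ((-1 : ℤ) ^ (a + b)) • (x ⊗ₜ[𝕜] y) := by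
  rw [pow_add]
  rcases neg_one_pow_eq_or ℤ a with h | h <;> rcases neg_one_pow_eq_or ℤ b with h' | h' <;>
    simp [h, h', TensorProduct.neg_tmul, TensorProduct.tmul_neg]

lemma sgn_congr {a b c : ℕ} (h : a + 2 * c = b) : (-1 : ℤ) ^ a = (-1) ^ b := by
  rw [← h, pow_add, pow_mul]; simp

lemma act_XB {P : GoodPair 𝕜 A β} (D : Tower 𝕜 A β n T P) {d : ℕ} (σ : Equiv.Perm (Fin d))
    (w : WordTriple β n d) : D.act σ (XB D w) = ((-1 : ℤ) ^ sgnW P σ w) • XB D (wAct w σ) :=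
  D.act_X σ _ _ _ (fun k => bas_homog P _)

lemma xiW_mem [Nontrivial 𝕜] {P : GoodPair 𝕜 A β} (D : Tower 𝕜 A β n T P)
    (ord : LinearOrder (A × Fin n × Fin n)) {d : ℕ} (w : WordTriple β n d)
    (h : IsTriB P w.1 w.2.1 w.2.2) : xiW D ord w ∈ SchurS D d := by
  intro σ
  rw [xiW_eq, map_sum]
  refine Finset.sum_bij (fun v _ => wAct v σ) ?_ ?_ ?_ ?_
  · intro v hv
    obtain ⟨τ, rfl⟩ := (mem_orb _ _).mp hv
    exact (mem_orb _ _).mpr ⟨τ * σ, rfl⟩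
  · intro u _ v _ huv; exact wAct_inj huv
  · intro v hv
    obtain ⟨τ, rfl⟩ := (mem_orb _ _).mp hv
    refine ⟨wAct w (τ * σ⁻¹), (mem_orb _ _).mpr ⟨_, rfl⟩, ?_⟩
    rw [wAct_mul]; simp
  · intro v hv
    obtain ⟨τ, rfl⟩ := (mem_orb _ _).mp hv
    rw [map_zsmul, act_XB, smul_smul]
    congr 1
    obtain ⟨c, hc⟩ := angW_wAct P ord (wAct w τ) σ (isTriB_wAct P w τ h)
    rw [← pow_add]
    symm
    apply sgn_congr (c := c)
    omega

lemma repr_act {P : GoodPair 𝕜 A β} (D : Tower 𝕜 A β n T P) {d : ℕ} (σ : Equiv.Perm (Fin d))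
    (w : WordTriple β n d) (x : T d) :
    (D.bas d).repr (D.act σ x) (wAct w σ) = ((-1 : ℤ) ^ sgnW P σ w) • (D.bas d).repr x w := by
  have key : (Finsupp.lapply (wAct w σ)) ∘ₗ (D.bas d).repr.toLinearMap ∘ₗ D.act σ
      = ((-1 : ℤ) ^ sgnW P σ w) • (Finsupp.lapply w ∘ₗ (D.bas d).repr.toLinearMap) := by
    apply (D.bas d).ext
    intro v
    simp only [LinearMap.comp_apply, LinearMap.smul_apply, LinearEquiv.coe_coe,
      Finsupp.lapply_apply, Module.Basis.repr_self]
    rw [bas_XB, act_XB, ← bas_XB, map_zsmul, Module.Basis.repr_self, Finsupp.smul_apply]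
    by_cases hvw : v = w
    · subst hvw; simp
    · have : wAct v σ ≠ wAct w σ := fun hh => hvw (wAct_inj hh)
      simp [Finsupp.single_apply, this, hvw]
  exact LinearMap.congr_fun key x

lemma repr_wAct {P : GoodPair 𝕜 A β} (D : Tower 𝕜 A β n T P) {d : ℕ} (σ : Equiv.Perm (Fin d))
    (w : WordTriple β n d) (x : T d) (hx : x ∈ SchurS D d) :
    (D.bas d).repr x (wAct w σ) = ((-1 : ℤ) ^ sgnW P σ w) • (D.bas d).repr x w := by
  rw [← repr_act, hx σ]

lemma repr_bad [IsDomain 𝕜] [CharZero 𝕜] {P : GoodPair 𝕜 A β} (D : Tower 𝕜 A β n T P) {d : ℕ}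
    (w : WordTriple β n d) (x : T d) (hx : x ∈ SchurS D d)
    (h : ¬ IsTriB P w.1 w.2.1 w.2.2) : (D.bas d).repr x w = 0 := by
  have : ∃ k l : Fin d, k < l ∧ ((w.1 k, w.2.1 k, w.2.2 k) : β × Fin n × Fin n)
      = (w.1 l, w.2.1 l, w.2.2 l) ∧ P.part (w.1 k) = 2 := by
    unfold IsTriB at h
    push Not at h
    obtain ⟨k, l, hkl, he, hp⟩ := h
    rcases lt_or_gt_of_ne hkl with h1 | h1
    · exact ⟨k, l, h1, he, hp⟩
    · refine ⟨l, k, h1, he.symm, ?_⟩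
      simp only [Prod.mk.injEq] at he
      rw [← he.1]; exact hp
  obtain ⟨k, l, hkl, he, hp⟩ := this
  simp only [Prod.mk.injEq] at he
  have hk := P.bas_mem_od _ hp
  obtain ⟨c, hc⟩ := sgnW_swap P w k l hkl hk (he.1 ▸ hk)
  have hw : wAct w (Equiv.swap k l) = w := by
    have aux : ∀ {α : Type} (f : Fin d → α), f k = f l → f ∘ (Equiv.swap k l) = f := by
      intro α f hf
      funext i
      simp only [Function.comp_apply, Equiv.swap_apply_def]
      split_ifs with h1 h2
      · rw [h1, hf]
      · rw [h2, hf]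
      · rfl
    simp only [wAct, aux _ he.1, aux _ he.2.1, aux _ he.2.2]
  have := repr_wAct D (Equiv.swap k l) w x hx
  rw [hw, hc, pow_succ, pow_mul] at this
  simp only [even_two, Even.neg_pow, one_pow, one_mul, neg_smul, one_smul] at this
  exact self_eq_neg.mp this

lemma mem_span_xiW [IsDomain 𝕜] [CharZero 𝕜] {P : GoodPair 𝕜 A β} (D : Tower 𝕜 A β n T P)
    (ord : LinearOrder (A × Fin n × Fin n)) {d : ℕ} (x : T d) (hx : x ∈ SchurS D d) :
    x ∈ Submodule.span 𝕜 {y | ∃ w : WordTriple β n d, IsTri0 P ord w ∧ y = xiW D ord w} := by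
  have hsum : x = ∑ w ∈ ((D.bas d).repr x).support, (D.bas d).repr x w • XB D w := by
    conv_lhs => rw [← (D.bas d).linearCombination_repr x]
    rw [Finsupp.linearCombination_apply, Finsupp.sum]
    simp only [bas_XB]
  rw [hsum, ← Finset.sum_fiberwise_of_maps_to (g := srt P ord)
    (fun w hw => Finset.mem_image_of_mem (srt P ord) hw)]
  refine Submodule.sum_mem _ fun u hu => ?_
  obtain ⟨w, hw, rfl⟩ := Finset.mem_image.mp hu
  have hB : IsTriB P w.1 w.2.1 w.2.2 := by
    by_contra hc
    exact (Finsupp.mem_support_iff.mp hw) (repr_bad D w x hx hc)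
  have hm := srt_mono P ord w
  have h0 : IsTri0 P ord (srt P ord w) := (isTri0_iff _ _ _).mpr ⟨isTriB_wAct P w _ hB, hm⟩
  generalize hu' : srt P ord w = u at *
  have hnz : ∀ σ, (D.bas d).repr x (wAct u σ) ≠ 0 := by
    intro σ hz
    obtain ⟨τ, hτ⟩ := (mem_orb _ _).mp (mem_orb_srt P ord w)
    rw [hu'] at hτ
    rw [Finsupp.mem_support_iff, ← hτ] at hw
    apply hw
    rw [repr_wAct D τ u x hx]
    rw [repr_wAct D σ u x hx] at hz
    have : (D.bas d).repr x u = 0 := by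
      rcases neg_one_pow_eq_or ℤ (sgnW P σ u) with h | h <;> simpa [h] using hz
    rw [this, smul_zero]
  have : (∑ w ∈ ((D.bas d).repr x).support with srt P ord w = u, (D.bas d).repr x w • XB D w)
      = (D.bas d).repr x u • xiW D ord u := by
    rw [xiW_eq, Finset.smul_sum]
    refine Finset.sum_congr ?_ ?_
    · ext v
      rw [Finset.mem_filter, Finsupp.mem_support_iff]
      constructor
      · rintro ⟨_, rfl⟩; exact mem_orb_srt P ord v
      · intro hv
        obtain ⟨σ, rfl⟩ := (mem_orb _ _).mp hv
        exact ⟨hnz σ, srt_wAct P ord u σ hm⟩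
    · intro v hv
      obtain ⟨σ, rfl⟩ := (mem_orb _ _).mp hv
      obtain ⟨c, hc⟩ := angW_wAct P ord u σ h0.1
      rw [repr_wAct D σ u x hx, angW_mono P ord u hm, zero_add,
        sgn_congr hc, angW_mono P ord u hm, zero_add]
      rcases neg_one_pow_eq_or ℤ (sgnW P σ u) with h | h <;> simp [h]
  rw [this]
  exact Submodule.smul_mem _ _ (Submodule.subset_span ⟨u, h0, rfl⟩)

lemma nab_xiW [Nontrivial 𝕜] {P : GoodPair 𝕜 A β} (D : Tower 𝕜 A β n T P)
    (ord : LinearOrder (A × Fin n × Fin n)) {d l : ℕ} (hl : l ≤ d) (h : d = l + (d - l))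
    (w : WordTriple β n d) (hw : IsTri0 P ord w)
    (sig : WordTriple β n l × WordTriple β n (d - l) → Equiv.Perm (Fin d))
    (hsig : ∀ p ∈ splitsF P ord l hl w, wAct w (sig p) = concatW l hl p) :
    D.nab l (d - l) (tcast (𝕜 := 𝕜) h (xiW D ord w)) =
      ∑ p ∈ splitsF P ord l hl w,
        ((-1 : ℤ) ^ sgnW P (sig p) w) • (xiW D ord p.1 ⊗ₜ[𝕜] xiW D ord p.2) := by
  obtain ⟨hB, hm⟩ := (isTri0_iff _ _ _).mp hw
  rw [xiW_eq, map_sum, map_sum]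
  rw [← Finset.sum_fiberwise_of_maps_to
    (g := fun v => (srt P ord (firstW l hl v), srt P ord (lastW l hl v)))
    (t := splitsF P ord l hl w)]
  swap
  · intro v hv
    obtain ⟨σ, rfl⟩ := (mem_orb _ _).mp hv
    have hBσ := isTriB_wAct P w σ hB
    rw [splitsF, Finset.mem_filter]
    refine ⟨?_, ?_, ?_⟩
    · rw [Finset.mem_image]
      refine ⟨σ * cP l hl
        (letI := ord; Tuple.sort (entryAt P (firstW l hl (wAct w σ))))
        (letI := ord; Tuple.sort (entryAt P (lastW l hl (wAct w σ)))), Finset.mem_univ _, ?_⟩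
      rw [← wAct_mul, firstW_cP, lastW_cP]; rfl
    · exact (isTri0_iff _ _ _).mpr ⟨isTriB_wAct P _ _ (isTriB_firstW P l hl _ hBσ), srt_mono _ _ _⟩
    · exact (isTri0_iff _ _ _).mpr ⟨isTriB_wAct P _ _ (isTriB_lastW P l hl _ hBσ), srt_mono _ _ _⟩
  refine Finset.sum_congr rfl fun p hp => ?_
  have hsp := hsig p hp
  rw [splitsF, Finset.mem_filter] at hp
  obtain ⟨hp0, hp1, hp2⟩ := hp
  obtain ⟨hB1, hm1⟩ := (isTri0_iff _ _ _).mp hp1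
  obtain ⟨hB2, hm2⟩ := (isTri0_iff _ _ _).mp hp2
  rw [xiW_eq, xiW_eq, TensorProduct.sum_tmul, Finset.smul_sum]
  simp only [TensorProduct.tmul_sum, Finset.smul_sum]
  rw [← Finset.sum_product']
  have hsgn : ∃ c, crs P ord p.1 p.2 + 2 * c = sgnW P (sig p) w := by
    obtain ⟨c, hc⟩ := angW_wAct P ord w (sig p) hB
    rw [hsp, angW_mono P ord w hm, angW_split P ord l hl, firstW_concatW, lastW_concatW,
      angW_mono P ord _ hm1, angW_mono P ord _ hm2] at hc
    exact ⟨c, by omega⟩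
  refine Finset.sum_bij' (fun v _ => (firstW l hl v, lastW l hl v))
    (fun q _ => concatW l hl q) ?_ ?_ ?_ ?_ ?_
  · intro v hv
    rw [Finset.mem_filter] at hv
    obtain ⟨_, rfl⟩ := hv
    exact Finset.mem_product.mpr ⟨mem_orb_srt _ _ _, mem_orb_srt _ _ _⟩
  · rintro ⟨u, v⟩ hq
    obtain ⟨h1, h2⟩ := Finset.mem_product.mp hq
    obtain ⟨σ, rfl⟩ := (mem_orb _ _).mp h1
    obtain ⟨τ, rfl⟩ := (mem_orb _ _).mp h2
    rw [Finset.mem_filter, firstW_concatW, lastW_concatW, srt_wAct P ord _ _ hm1,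
      srt_wAct P ord _ _ hm2]
    refine ⟨?_, rfl⟩
    rw [mem_orb]
    refine ⟨sig p * cP l hl σ τ, ?_⟩
    rw [← wAct_mul, hsp, ← concatW_fl l hl (wAct _ _), firstW_cP, lastW_cP, firstW_concatW,
      lastW_concatW]
  · intro v hv; exact concatW_fl l hl v
  · intro q hq
    show (_, _) = q
    rw [firstW_concatW, lastW_concatW]
  · intro v hv
    rw [Finset.mem_filter] at hv
    obtain ⟨_, rfl⟩ := hv
    obtain ⟨c, hc⟩ := hsgn
    rw [map_zsmul, map_zsmul, nab_XB D hl, sgn_tmul, smul_smul, ← pow_add]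
    congr 1
    have hcr : crs P ord (srt P ord (firstW l hl v)) (srt P ord (lastW l hl v))
        = crs P ord (firstW l hl v) (lastW l hl v) := crs_wAct _ _ _ _ _ _
    have hs := angW_split P ord l hl v
    apply sgn_congr (c := c)
    simp only [angW_mono P ord _ hm, angW_mono P ord _ hm1, angW_mono P ord _ hm2]
    simp only at hc
    omega

lemma exists_sig (P : GoodPair 𝕜 A β) (ord : LinearOrder (A × Fin n × Fin n)) {d l : ℕ}
    (hl : l ≤ d) (w : WordTriple β n d) :
    ∃ sig : WordTriple β n l × WordTriple β n (d - l) → Equiv.Perm (Fin d),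
      ∀ p ∈ splitsF P ord l hl w, wAct w (sig p) = concatW l hl p := by
  have : ∀ p, ∃ σ : Equiv.Perm (Fin d), p ∈ splitsF P ord l hl w →
      wAct w σ = concatW l hl p := by
    intro p
    by_cases hp : p ∈ splitsF P ord l hl w
    · have := (Finset.mem_filter.mp hp).1
      obtain ⟨σ, _, rfl⟩ := Finset.mem_image.mp this
      exact ⟨σ, fun _ => (concatW_fl l hl _).symm⟩
    · exact ⟨1, fun h => absurd h hp⟩
  choose sig hsig using this
  exact ⟨sig, hsig⟩

end alg

/-- For `T = (𝐛,𝐫,𝐬) ∈ Tri^B_0(n,d)` and each `l ≤ d`, the `(l, d-l)`-th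
component of the deconcatenation coproduct satisfies
`∇(ξ_T) = Σ_{(T¹,T²) ∈ Spl_l(T)} (−1)^{⟨σ^T_{T¹,T²};𝐛⟩} ξ_{T¹} ⊗ ξ_{T²}`, where
`σ^T_{T¹,T²}` is the (shortest) coset representative with `T·σ = T¹T²` (given as the data
`sig` with the properties `hsig`).  In particular each component of `∇` maps `S^A(n,d)` into
`S^A(n,l) ⊗ S^A(n,d−l)`, so `S^A(n) = ⊕_d S^A(n,d)` is a sub-supercoalgebra of
`⊕_d M_n(A)^{⊗d}`. -/
theorem statement4 {𝕜 A β : Type} [CommRing 𝕜] [IsDomain 𝕜] [CharZero 𝕜]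
    [NonUnitalRing A] [Module 𝕜 A] [SMulCommClass 𝕜 A A] [IsScalarTower 𝕜 A A]
    {n : ℕ} (hn : 0 < n) {T : ℕ → Type} [∀ e, NonUnitalRing (T e)] [∀ e, Module 𝕜 (T e)]
    (P : GoodPair 𝕜 A β) (D : Tower 𝕜 A β n T P) (ord : LinearOrder (A × Fin n × Fin n))
    (d l : ℕ) (hl : l ≤ d)
    (w : WordTriple β n d) (hw : IsTri0 P ord w)
    (sig : WordTriple β n l × WordTriple β n (d - l) → Equiv.Perm (Fin d))
    (hsig : ∀ p ∈ splitsF P ord l hl w,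
      wAct w (sig p) = concatW l hl p ∧
        ∀ σ : Equiv.Perm (Fin d), wAct w σ = concatW l hl p → invCount (sig p) ≤ invCount σ) :
    (D.nab l (d - l)
        (tcast (𝕜 := 𝕜) (show d = l + (d - l) by omega) (xiB D ord w.1 w.2.1 w.2.2)) =
      ∑ p ∈ splitsF P ord l hl w,
        ((-1 : ℤ) ^ sgnc P.od (sig p) (fun k => P.bas (w.1 k))) •
          (xiB D ord p.1.1 p.1.2.1 p.1.2.2 ⊗ₜ[𝕜] xiB D ord p.2.1 p.2.2.1 p.2.2.2)) ∧
    (∀ x ∈ SchurS D d, D.nab l (d - l) (tcast (𝕜 := 𝕜) (show d = l + (d - l) by omega) x) ∈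
      LinearMap.range (TensorProduct.map (SchurS D l).subtype (SchurS D (d - l)).subtype)) := by
  refine ⟨nab_xiW D ord hl _ w hw sig fun p hp => (hsig p hp).1, ?_⟩
  intro x hx
  have hspan := mem_span_xiW D ord x hx
  have hle : Submodule.span 𝕜 {y | ∃ u : WordTriple β n d, IsTri0 P ord u ∧ y = xiW D ord u} ≤
      (LinearMap.range (TensorProduct.map (SchurS D l).subtype
        (SchurS D (d - l)).subtype)).comap
        (D.nab l (d - l) ∘ₗ (tcast (𝕜 := 𝕜) (T := T)
          (show d = l + (d - l) by omega)).toLinearMap) := by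
    rw [Submodule.span_le]
    rintro y ⟨u, hu, rfl⟩
    obtain ⟨sg, hsg⟩ := exists_sig P ord hl u
    show D.nab l (d - l) (tcast (𝕜 := 𝕜) (show d = l + (d - l) by omega) (xiW D ord u)) ∈
      LinearMap.range (TensorProduct.map (SchurS D l).subtype (SchurS D (d - l)).subtype)
    rw [nab_xiW D ord hl _ u hu sg hsg]
    refine Submodule.sum_mem _ fun p hp => ?_
    have hp' := (Finset.mem_filter.mp hp).2
    refine zsmul_mem ?_ _
    exact ⟨⟨_, xiW_mem D ord p.1 hp'.1.1⟩ ⊗ₜ[𝕜] ⟨_, xiW_mem D ord p.2 hp'.2.1⟩, rfl⟩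
  exact hle hspan
end GS
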